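/- arXiv:1212.3509 — 2 statements merged into one kernel-verified Lean document; each statement's English description precedes it below -/
import Mathlib

section
/- Let C = Π_{j=1}^3 [a_j, b_j] ⊂ ℝ³ with 0 < a_j < b_j for each j, and define f̃ : ℝ → ℝ by f̃(t) = ∫_C x₁ cosh(t) sinh²(t) exp(−sinh²(t)(x₁² + x₂² + x₃²)) dx. Then f̃ has double exponential decay on the real axis: there exist constants C₀ > 0 and β > 0 such that |f̃(t)| ≤ C₀ exp(−β e^{2|t|}) for all t ∈ ℝ. -/
open MeasureTheory Real

/-- Double exponential decay of the transformed integrand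
`f̃(t) = ∫_C x₁ cosh(t) sinh²(t) exp(−sinh²(t)‖x‖²) dx` on the real axis:
there are `C₀ > 0`, `β > 0` with `|f̃(t)| ≤ C₀ exp(−β e^{2|t|})` for all `t`. -/
theorem transformed_integrand_double_exponential_decay (a b : Fin 3 → ℝ)
    (hab : ∀ j, 0 < a j ∧ a j < b j) :
    ∃ C₀ > 0, ∃ β > 0, ∀ t : ℝ,
      |∫ x in Set.univ.pi fun j => Set.Icc (a j) (b j),
          x 0 * Real.cosh t * Real.sinh t ^ 2 *
            Real.exp (-(Real.sinh t ^ 2) * (∑ j, x j ^ 2))|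
        ≤ C₀ * Real.exp (-β * Real.exp (2 * |t|)) := by
  have ha := (hab 0).1
  have hb : 0 < b 0 := ha.trans (hab 0).2
  set S : Set (Fin 3 → ℝ) := Set.univ.pi fun j => Set.Icc (a j) (b j) with hS
  have hfin : volume S < ⊤ :=
    (isCompact_univ_pi fun j => isCompact_Icc (a := a j) (b := b j)).measure_lt_top
  set V := volume.real S with hV
  have hV0 : 0 ≤ V := measureReal_nonneg
  obtain ⟨A, hA⟩ : ∃ A, A = a 0 ^ 2 := ⟨_, rfl⟩
  have hA0 : 0 < A := by rw [hA]; positivity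
  set M := b 0 * (Real.exp A * (16 / A ^ 2)) with hM
  have hM0 : 0 < M := by positivity
  refine ⟨M * V + 1, by positivity, A / 8, by positivity, fun t => ?_⟩
  have key : ∀ x ∈ S, ‖x 0 * Real.cosh t * Real.sinh t ^ 2 *
      Real.exp (-(Real.sinh t ^ 2) * (∑ j, x j ^ 2))‖
        ≤ M * Real.exp (-(A / 8) * Real.exp (2 * |t|)) := by
    intro x hx
    have hx0 : a 0 ≤ x 0 ∧ x 0 ≤ b 0 := hx 0 (Set.mem_univ _)
    have hxp : 0 < x 0 := ha.trans_le hx0.1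
    have hc1 := Real.one_le_cosh t
    have hcs := Real.cosh_sq t
    have hs0 : 0 ≤ Real.sinh t ^ 2 := sq_nonneg _
    have hsum : A ≤ ∑ j, x j ^ 2 := by
      rw [Fin.sum_univ_three, hA]
      nlinarith [sq_nonneg (x 1), sq_nonneg (x 2)]
    rw [Real.norm_of_nonneg (by positivity)]
    set y := Real.cosh t ^ 2 with hy
    have hy1 : 1 ≤ y := by nlinarith
    have hse : Real.sinh t ^ 2 = y - 1 := by linarith
    have hcy : Real.cosh t ≤ y := by nlinarith
    have hexpy : Real.exp (2 * |t|) / 4 ≤ y := by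
      have h1 : Real.exp |t| / 2 ≤ Real.cosh t := by
        rw [← Real.cosh_abs, Real.cosh_eq]
        linarith [Real.exp_pos (-|t|)]
      have h2 : Real.exp (2 * |t|) = Real.exp |t| ^ 2 := by
        rw [← Real.exp_nat_mul]; norm_num
      rw [h2, hy]
      nlinarith [Real.exp_pos |t|]
    have hy2 : y ^ 2 ≤ 16 / A ^ 2 * Real.exp (y * A / 2) := by
      have h1 : y * A / 4 ≤ Real.exp (y * A / 4) := by
        linarith [Real.add_one_le_exp (y * A / 4)]
      have h2 : Real.exp (y * A / 2) = Real.exp (y * A / 4) ^ 2 := by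
        rw [← Real.exp_nat_mul]; congr 1; push_cast; ring
      have h3 : (y * A / 4) ^ 2 ≤ Real.exp (y * A / 4) ^ 2 :=
        pow_le_pow_left₀ (by positivity) h1 2
      rw [h2]
      calc y ^ 2 = 16 / A ^ 2 * (y * A / 4) ^ 2 := by field_simp; norm_num
        _ ≤ _ := by gcongr
    have he : Real.exp (-(Real.sinh t ^ 2) * (∑ j, x j ^ 2))
        ≤ Real.exp (A - y * A) := by
      apply Real.exp_le_exp.2
      nlinarith [mul_le_mul_of_nonneg_left hsum hs0]
    calc x 0 * Real.cosh t * Real.sinh t ^ 2 *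
          Real.exp (-(Real.sinh t ^ 2) * (∑ j, x j ^ 2))
        ≤ b 0 * y * y * Real.exp (A - y * A) := by
          have := hx0.2
          have : Real.sinh t ^ 2 ≤ y := by linarith
          gcongr
      _ = b 0 * (y ^ 2 * Real.exp (A - y * A)) := by ring
      _ ≤ b 0 * (16 / A ^ 2 * Real.exp (y * A / 2) * Real.exp (A - y * A)) := by gcongr
      _ = M * Real.exp (-(y * A / 2)) := by
          have : Real.exp (A - y * A) =
              Real.exp A * Real.exp (-(y * A / 2)) * Real.exp (-(y * A / 2)) := by
            rw [← Real.exp_add, ← Real.exp_add]; congr 1; ring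
          have h1 : Real.exp (y * A / 2) * Real.exp (-(y * A / 2)) = 1 := by
            rw [← Real.exp_add]; simp
          rw [this, hM]
          linear_combination
            (b 0 * (16 / A ^ 2) * Real.exp A * Real.exp (-(y * A / 2))) * h1
      _ ≤ _ := by
          gcongr
          nlinarith
  have h := norm_setIntegral_le_of_norm_le_const hfin key
  rw [Real.norm_eq_abs] at h
  refine h.trans ?_
  have := Real.exp_pos (-(A / 8) * Real.exp (2 * |t|))
  rw [← hV]
  nlinarith
end

section
/- Fix mode sizes (n₁,n₂,n₃) and ranks (r₁,r₂,r₃), and let T ⊆ ℝ^{n₁×n₂×n₃} be the set of tensors whose j-mode unfoldings have rank at most r_j for j = 1,2,3. Then for every X ∈ ℝ^{n₁×n₂×n₃} there exists X_best ∈ T such that ‖X − X_best‖_F ≤ ‖X − Y‖_F for all Y ∈ T, i.e. a best Tucker approximation with prescribed multilinear ranks always exists. -/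
open Finset

/-- The set of matrices of rank at most `r`, pulled back along a linear map, is closed. -/
lemma isClosed_rank_le_comp {E m n : Type*} [NormedAddCommGroup E] [NormedSpace ℝ E]
    [FiniteDimensional ℝ E] [Fintype m] [Fintype n] [DecidableEq n]
    (L : E →ₗ[ℝ] Matrix m n ℝ) (r : ℕ) : IsClosed {x : E | (L x).rank ≤ r} := by
  let G : E →ₗ[ℝ] ((n → ℝ) →L[ℝ] (m → ℝ)) :=
    (LinearMap.toContinuousLinearMap.toLinearMap ∘ₗ (Matrix.toLin').toLinearMap) ∘ₗ L
  have hG : Continuous G := G.continuous_of_finiteDimensional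
  have ho := (isOpen_setOfPred_nat_le_rank (𝕜 := ℝ) (E := n → ℝ) (F := m → ℝ) (r + 1)).preimage hG
  rw [← isOpen_compl_iff]
  convert ho using 1
  ext x
  have h1 : ((G x : (n → ℝ) →L[ℝ] (m → ℝ)) : (n → ℝ) →ₗ[ℝ] (m → ℝ)).rank
      = ((L x).rank : Cardinal) := by
    rw [Matrix.rank, LinearMap.rank, Module.finrank_eq_rank]
    rfl
  simp only [Set.mem_compl_iff, Set.mem_ofPred_eq, Set.mem_preimage, not_le]
  rw [h1]
  norm_cast

/-- Existence of a best Tucker approximation with prescribed multilinear ranks: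
for every order-3 tensor `X` there is a tensor `X_best` whose `j`-mode unfoldings
have rank at most `r_j` and which minimizes the Frobenius distance to `X` among
all such tensors. -/
theorem best_tucker_approximation_exists (n₁ n₂ n₃ r₁ r₂ r₃ : ℕ)
    (X : Fin n₁ → Fin n₂ → Fin n₃ → ℝ) :
    ∃ Xbest ∈ {Y : Fin n₁ → Fin n₂ → Fin n₃ → ℝ |
        (Matrix.of fun i₁ (p : Fin n₂ × Fin n₃) => Y i₁ p.1 p.2).rank ≤ r₁ ∧
        (Matrix.of fun i₂ (p : Fin n₁ × Fin n₃) => Y p.1 i₂ p.2).rank ≤ r₂ ∧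
        (Matrix.of fun i₃ (p : Fin n₁ × Fin n₂) => Y p.1 p.2 i₃).rank ≤ r₃},
      ∀ Y ∈ {Y : Fin n₁ → Fin n₂ → Fin n₃ → ℝ |
        (Matrix.of fun i₁ (p : Fin n₂ × Fin n₃) => Y i₁ p.1 p.2).rank ≤ r₁ ∧
        (Matrix.of fun i₂ (p : Fin n₁ × Fin n₃) => Y p.1 i₂ p.2).rank ≤ r₂ ∧
        (Matrix.of fun i₃ (p : Fin n₁ × Fin n₂) => Y p.1 p.2 i₃).rank ≤ r₃},
      Real.sqrt (∑ i₁ : Fin n₁, ∑ i₂ : Fin n₂, ∑ i₃ : Fin n₃,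
          (X i₁ i₂ i₃ - Xbest i₁ i₂ i₃) ^ 2) ≤
        Real.sqrt (∑ i₁ : Fin n₁, ∑ i₂ : Fin n₂, ∑ i₃ : Fin n₃,
          (X i₁ i₂ i₃ - Y i₁ i₂ i₃) ^ 2) := by
  classical
  let E := EuclideanSpace ℝ (Fin n₁ × Fin n₂ × Fin n₃)
  let L₁ : E →ₗ[ℝ] Matrix (Fin n₁) (Fin n₂ × Fin n₃) ℝ :=
    { toFun := fun x => Matrix.of fun i p => x (i, p.1, p.2)
      map_add' := fun _ _ => rfl
      map_smul' := fun _ _ => rfl }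
  let L₂ : E →ₗ[ℝ] Matrix (Fin n₂) (Fin n₁ × Fin n₃) ℝ :=
    { toFun := fun x => Matrix.of fun i p => x (p.1, i, p.2)
      map_add' := fun _ _ => rfl
      map_smul' := fun _ _ => rfl }
  let L₃ : E →ₗ[ℝ] Matrix (Fin n₃) (Fin n₁ × Fin n₂) ℝ :=
    { toFun := fun x => Matrix.of fun i p => x (p.1, p.2, i)
      map_add' := fun _ _ => rfl
      map_smul' := fun _ _ => rfl }
  let S : Set E := {x | (L₁ x).rank ≤ r₁} ∩ ({x | (L₂ x).rank ≤ r₂} ∩ {x | (L₃ x).rank ≤ r₃})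
  have hS : IsClosed S := (isClosed_rank_le_comp L₁ r₁).inter
    ((isClosed_rank_le_comp L₂ r₂).inter (isClosed_rank_le_comp L₃ r₃))
  have hne : S.Nonempty := ⟨0, by simp [S]⟩
  let toE : (Fin n₁ → Fin n₂ → Fin n₃ → ℝ) → E :=
    fun Y => WithLp.toLp 2 fun p => Y p.1 p.2.1 p.2.2
  obtain ⟨y, hy, hmin⟩ := hS.exists_infDist_eq_dist hne (toE X)
  have hd : ∀ Y, dist (toE X) (toE Y) = Real.sqrt (∑ i₁ : Fin n₁, ∑ i₂ : Fin n₂, ∑ i₃ : Fin n₃,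
      (X i₁ i₂ i₃ - Y i₁ i₂ i₃) ^ 2) := by
    intro Y
    refine (EuclideanSpace.dist_eq (toE X) (toE Y)).trans ?_
    simp [toE, Fintype.sum_prod_type, Real.dist_eq, sq_abs]
  refine ⟨fun i j k => y (i, j, k), hy, fun Y hY => ?_⟩
  rw [← hd, ← hd]
  have hY' : toE Y ∈ S := hY
  have := Metric.infDist_le_dist_of_mem (x := toE X) hY'
  rw [hmin] at this
  exact this
end
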